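/- arXiv:1706.06610 — 2 statements merged into one kernel-verified Lean document; each statement's English description precedes it below -/
import Mathlib

section
/- (Theorem 2.3 of the paper.) Let 0 < a < b, set c = (a+b)/2 and h = (b−a)/2, and define g(t) = (c + h t)^{−1/2} and q(t) = (c + h t)^{−1} for t ∈ [−1, 1]. Let ρ be any real number with 1 < ρ < c/h + √((c/h)² − 1). Then the degree-k₁ truncated Chebyshev expansion g_{k₁} of g and the degree-k₂ truncated Chebyshev expansion q_{k₂} of q satisfy sup_{t∈[−1,1]} |g(t) − g_{k₁}(t)| ≤ 2 ρ^{−k₁} / ((ρ − 1) · √(c − h (ρ + ρ⁻¹)/2)) and sup_{t∈[−1,1]} |q(t) − q_{k₂}(t)| ≤ 2 ρ^{−k₂} / ((ρ − 1) · (c − h (ρ + ρ⁻¹)/2)). -/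
open Polynomial intervalIntegral

lemma cb_even_int (F : ℝ → ℝ) (hF : Continuous F) (heven : ∀ x, F (-x) = F x) (n : ℤ) :
    ∫ θ in (-Real.pi)..Real.pi, Complex.exp (-(n * θ * Complex.I)) * (F θ : ℂ) =
      ((2 * ∫ θ in (0:ℝ)..Real.pi, F θ * Real.cos (n * θ) : ℝ) : ℂ) := by
  have hFc : Continuous fun x : ℝ => (F x : ℂ) := Complex.continuous_ofReal.comp hF
  have hc : Continuous fun θ : ℝ => Complex.exp (-(n * θ * Complex.I)) * (F θ : ℂ) := by fun_prop
  have hc' : Continuous fun θ : ℝ => Complex.exp (n * θ * Complex.I) * (F θ : ℂ) := by fun_prop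
  rw [← integral_add_adjacent_intervals (b := (0:ℝ)) (hc.intervalIntegrable _ _)
    (hc.intervalIntegrable _ _)]
  have h1 : ∫ θ in (-Real.pi)..0, Complex.exp (-(n * θ * Complex.I)) * (F θ : ℂ) =
      ∫ θ in (0:ℝ)..Real.pi, Complex.exp (n * θ * Complex.I) * (F θ : ℂ) := by
    have := intervalIntegral.integral_comp_neg (a := 0) (b := Real.pi)
      (fun θ : ℝ => Complex.exp (-(n * θ * Complex.I)) * (F θ : ℂ))
    rw [neg_zero] at this
    rw [← this]
    congr 1
    ext θ
    rw [heven]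
    push_cast
    congr 2
    ring
  rw [h1, ← integral_add (hc'.intervalIntegrable _ _) (hc.intervalIntegrable _ _)]
  rw [← intervalIntegral.integral_const_mul, ← intervalIntegral.integral_ofReal]
  congr 1
  ext θ
  push_cast
  rw [Complex.cos]
  ring_nf

lemma cb_coeff_bound (F : ℝ → ℝ) (hF : Continuous F) (heven : ∀ x, F (-x) = F x)
    (hper : Function.Periodic F (2 * Real.pi)) (G : ℂ → ℂ) (ρ M : ℝ) (hρ : 1 < ρ)
    (hG : ∀ z : ℂ, 1 ≤ ‖z‖ → ‖z‖ ≤ ρ → DifferentiableAt ℂ G z)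
    (hGM : ∀ z : ℂ, ‖z‖ = ρ → ‖G z‖ ≤ M)
    (hGF : ∀ θ : ℝ, G (Complex.exp (θ * Complex.I)) = F θ) (n : ℕ) :
    |∫ θ in (0:ℝ)..Real.pi, F θ * Real.cos (n * θ)| ≤ Real.pi * M * (ρ⁻¹) ^ n := by
  set J := ∫ θ in (0:ℝ)..Real.pi, F θ * Real.cos (n * θ) with hJ
  have hρ0 : 0 < ρ := by linarith
  let H : ℂ → ℂ := fun z => (z ^ (n + 1))⁻¹ * G z
  have hne : ∀ z : ℂ, 1 ≤ ‖z‖ → z ≠ 0 := by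
    rintro z hz rfl
    norm_num at hz
  have hHd : ∀ z : ℂ, 1 ≤ ‖z‖ → ‖z‖ ≤ ρ → DifferentiableAt ℂ H z := by
    intro z h1 h2
    exact ((differentiableAt_id.pow (n+1)).inv (pow_ne_zero _ (hne z h1))).mul (hG z h1 h2)
  have hcirc : (∮ z in C(0, ρ), H z) = ∮ z in C(0, 1), H z := by
    apply Complex.circleIntegral_eq_of_differentiable_on_annulus_off_countable one_pos hρ.le
      Set.countable_empty
    · intro z hz
      simp at hz
      exact (hHd z hz.2 hz.1).continuousAt.continuousWithinAt
    · intro z hz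
      simp at hz
      exact hHd z hz.2.le hz.1.le
  have hbd : ‖∮ z in C(0, ρ), H z‖ ≤ 2 * Real.pi * ρ * ((ρ ^ (n+1))⁻¹ * M) := by
    apply circleIntegral.norm_integral_le_of_norm_le_const hρ0.le
    intro z hz
    simp at hz
    simp only [H, norm_mul, norm_inv, norm_pow, hz]
    gcongr
    exact hGM z hz
  have h1 : (∮ z in C(0, 1), H z) = Complex.I * ((2 * J : ℝ) : ℂ) := by
    have := cb_even_int F hF heven n
    simp only [Int.cast_natCast] at this
    rw [hJ, ← this, circleIntegral, ← intervalIntegral.integral_const_mul]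
    have hp : Function.Periodic (fun θ : ℝ => Complex.I * (Complex.exp (-(n * θ * Complex.I)) * (F θ : ℂ))) (2 * Real.pi) := by
      intro x
      simp only
      rw [hper x]
      congr 2
      rw [Complex.exp_eq_exp_iff_exists_int]
      refine ⟨-n, ?_⟩
      push_cast
      ring
    have h2 := hp.intervalIntegral_add_eq 0 (-Real.pi)
    rw [show -Real.pi + 2 * Real.pi = Real.pi by ring, zero_add] at h2
    rw [← h2]
    congr 1
    ext θ
    simp only [deriv_circleMap, circleMap, H, smul_eq_mul, zero_add, Complex.ofReal_one, one_mul]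
    rw [hGF, ← Complex.exp_nat_mul, ← Complex.exp_neg]
    have : Complex.exp (-(n * θ * Complex.I)) = Complex.exp (θ * Complex.I) * Complex.exp (-(((n+1 : ℕ) : ℂ) * (θ * Complex.I))) := by
      rw [← Complex.exp_add]
      congr 1
      push_cast
      ring
    rw [this]
    ring
  rw [hcirc, h1] at hbd
  rw [norm_mul, Complex.norm_I, one_mul, Complex.norm_real, Real.norm_eq_abs, abs_mul, abs_two] at hbd
  have : 2 * Real.pi * ρ * ((ρ ^ (n+1))⁻¹ * M) = 2 * (Real.pi * M * (ρ⁻¹) ^ n) := by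
    rw [inv_pow, pow_succ]
    field_simp
  linarith

lemma cb_series (F : ℝ → ℝ) (hF : Continuous F) (heven : ∀ x, F (-x) = F x)
    (hper : Function.Periodic F (2 * Real.pi)) (ρ M : ℝ) (hρ : 1 < ρ)
    (e : ℕ → ℝ) (he : ∀ n : ℕ, e n = ∫ θ in (0:ℝ)..Real.pi, F θ * Real.cos (n * θ))
    (hb : ∀ n, |e n| ≤ Real.pi * M * (ρ⁻¹) ^ n) (θ : ℝ) :
    HasSum (fun n : ℕ => 2 / Real.pi * e n * Real.cos (n * θ)) (F θ + e 0 / Real.pi) := by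
  have hpi := Real.pi_pos
  have : Fact (0 < 2 * Real.pi) := ⟨by positivity⟩
  have hFc : Continuous fun x : ℝ => (F x : ℂ) := Complex.continuous_ofReal.comp hF
  have hperc : Function.Periodic (fun x : ℝ => (F x : ℂ)) (2 * Real.pi) := by
    intro x; simp only; rw [hper x]
  let f : C(AddCircle (2 * Real.pi), ℂ) := ⟨hperc.lift, by
    apply continuous_coinduced_dom.mpr
    exact hFc⟩
  have hf : ∀ x : ℝ, f (x : AddCircle (2 * Real.pi)) = (F x : ℂ) := fun x => rfl
  have hfour : ∀ (n : ℤ) (x : ℝ), fourier n (x : AddCircle (2 * Real.pi)) =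
      Complex.exp (n * x * Complex.I) := by
    intro n x
    rw [fourier_coe_apply]
    congr 1
    have : (Real.pi : ℂ) ≠ 0 := by exact_mod_cast hpi.ne'
    push_cast
    field_simp
  have hcoef : ∀ n : ℤ, fourierCoeff f n = ((1 / Real.pi * e n.natAbs : ℝ) : ℂ) := by
    intro n
    rw [fourierCoeff_eq_intervalIntegral f n (-Real.pi),
      show -Real.pi + 2 * Real.pi = Real.pi by ring]
    have h1 : ∀ x : ℝ, fourier (-n) (x : AddCircle (2 * Real.pi)) • f (x : AddCircle (2 * Real.pi)) =
       Complex.exp (-(n * x * Complex.I)) * (F x : ℂ) := by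
      intro x
      rw [hfour, hf, smul_eq_mul]
      push_cast
      ring_nf
    simp_rw [h1]
    rw [cb_even_int F hF heven n, he]
    have h2 : ∀ x : ℝ, Real.cos ((n.natAbs : ℝ) * x) = Real.cos (n * x) := by
      intro x
      rcases Int.natAbs_eq n with h | h
      · conv_rhs => rw [h]
        simp
      · conv_rhs => rw [h]
        simp
    simp_rw [h2]
    rw [Complex.real_smul, ← Complex.ofReal_mul]
    congr 1
    field_simp
  have hρi : ρ⁻¹ < 1 := inv_lt_one_of_one_lt₀ hρ
  have hρp : 0 < ρ⁻¹ := by positivity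
  have hsN : Summable (fun n : ℕ => M * (ρ⁻¹) ^ n) :=
    (summable_geometric_of_lt_one hρp.le hρi).mul_left M
  have hsum : Summable (fourierCoeff f) := by
    apply Summable.of_norm_bounded (g := fun n : ℤ => M * (ρ⁻¹) ^ n.natAbs)
    · apply Summable.of_nat_of_neg
      · simpa using hsN
      · simpa using hsN
    · intro n
      rw [hcoef, Complex.norm_real, Real.norm_eq_abs, abs_mul, abs_of_pos (by positivity)]
      calc _ ≤ 1 / Real.pi * (Real.pi * M * (ρ⁻¹) ^ n.natAbs) := by gcongr; exact hb _
        _ = _ := by field_simp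
  have hs := has_pointwise_sum_fourier_series_of_summable hsum (θ : AddCircle (2 * Real.pi))
  have hs2 := hs.nat_add_neg
  rw [hf] at hs2
  have key := Complex.hasSum_re hs2
  convert key using 1
  · ext n
    simp only [hcoef, hfour, smul_eq_mul, Int.natAbs_neg, Int.natAbs_natCast]
    have e1 : ((n : ℤ) : ℂ) * θ * Complex.I = ((n * θ : ℝ) : ℂ) * Complex.I := by push_cast; ring
    have e2 : ((-(n : ℤ) : ℤ) : ℂ) * θ * Complex.I = ((-(n * θ) : ℝ) : ℂ) * Complex.I := by
      push_cast; ring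
    rw [e1, e2, Complex.add_re, Complex.re_ofReal_mul, Complex.re_ofReal_mul,
      Complex.exp_ofReal_mul_I_re, Complex.exp_ofReal_mul_I_re, Real.cos_neg]
    ring
  · rw [hcoef, hfour]
    simp
    ring

lemma cb_tail (F : ℝ → ℝ) (hF : Continuous F) (heven : ∀ x, F (-x) = F x)
    (hper : Function.Periodic F (2 * Real.pi)) (ρ M : ℝ) (hρ : 1 < ρ)
    (e : ℕ → ℝ) (he : ∀ n : ℕ, e n = ∫ θ in (0:ℝ)..Real.pi, F θ * Real.cos (n * θ))
    (hb : ∀ n, |e n| ≤ Real.pi * M * (ρ⁻¹) ^ n) (θ : ℝ) (k : ℕ) :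
    |F θ - ∑ i ∈ Finset.range (k + 1),
      ((2 - if i = 0 then 1 else 0) / Real.pi) * e i * Real.cos (i * θ)| ≤
      2 * ρ ^ (-(k : ℤ)) / (ρ - 1) * M := by
  have hpi := Real.pi_pos
  have hs := cb_series F hF heven hper ρ M hρ e he hb θ
  have hfin : ∑ i ∈ Finset.range (k + 1),
      ((2 - if i = 0 then 1 else 0) / Real.pi) * e i * Real.cos (i * θ) =
      ∑ i ∈ Finset.range (k + 1), 2 / Real.pi * e i * Real.cos (i * θ) - e 0 / Real.pi := by
    rw [Finset.sum_range_succ', Finset.sum_range_succ']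
    simp
    ring
  have ht := (hasSum_nat_add_iff' (k+1)).mpr hs
  rw [hfin, sub_sub_eq_add_sub, ← ht.tsum_eq]
  have hρi : ρ⁻¹ < 1 := inv_lt_one_of_one_lt₀ hρ
  have hρp : 0 < ρ⁻¹ := by positivity
  have hgeo : HasSum (fun n : ℕ => 2 * M * (ρ⁻¹) ^ (k+1) * (ρ⁻¹) ^ n)
      (2 * M * (ρ⁻¹) ^ (k+1) * (1 - ρ⁻¹)⁻¹) :=
    (hasSum_geometric_of_lt_one hρp.le hρi).mul_left _
  rw [← Real.norm_eq_abs]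
  refine (tsum_of_norm_bounded hgeo ?_).trans_eq ?_
  · intro n
    rw [Real.norm_eq_abs, abs_mul, abs_mul, abs_of_pos (show 0 < 2 / Real.pi by positivity)]
    calc _ ≤ 2 / Real.pi * (Real.pi * M * (ρ⁻¹) ^ (n + (k+1))) * 1 := by
          gcongr
          · exact mul_nonneg (by positivity) ((abs_nonneg _).trans (hb _))
          · exact hb _
          · exact Real.abs_cos_le_one _
      _ = _ := by
          rw [pow_add]
          field_simp
  · have : ρ - 1 ≠ 0 := by linarith
    have : ρ ≠ 0 := by linarith
    rw [zpow_neg, zpow_natCast, inv_pow, pow_succ, mul_inv]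
    field_simp

lemma cb_main (c h ρ s : ℝ) (hh : 0 < h) (hs : 0 < s) (hρ : 1 < ρ)
    (hpos : 0 < c - h * ((ρ + ρ⁻¹) / 2))
    (f : ℝ → ℝ) (hf : ∀ t, f t = (c + h * t) ^ (-s))
    (k : ℕ) (γ : ℕ → ℝ)
    (hγ : ∀ i : ℕ, γ i = ((2 - if i = 0 then 1 else 0) / Real.pi) *
      ∫ s in (-1 : ℝ)..1, f s * (Polynomial.Chebyshev.T ℝ i).eval s / Real.sqrt (1 - s ^ 2))
    (t : ℝ) (ht : t ∈ Set.Icc (-1 : ℝ) 1) :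
    |f t - ∑ i ∈ Finset.range (k + 1), γ i * (Polynomial.Chebyshev.T ℝ i).eval t| ≤
      2 * ρ ^ (-(k : ℤ)) / (ρ - 1) * (c - h * ((ρ + ρ⁻¹) / 2)) ^ (-s) := by
  have hρ0 : 0 < ρ := by linarith
  set m := c - h * ((ρ + ρ⁻¹) / 2) with hm
  have mono : ∀ r : ℝ, 1 ≤ r → r ≤ ρ → r + r⁻¹ ≤ ρ + ρ⁻¹ := by
    intro r h1 h2
    have hr : 0 < r := by linarith
    have : ρ + ρ⁻¹ - (r + r⁻¹) = (ρ - r) * (r * ρ - 1) / (r * ρ) := by field_simp; ring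
    have : 0 ≤ (ρ - r) * (r * ρ - 1) / (r * ρ) := by
      apply div_nonneg (mul_nonneg _ _) (by positivity)
      · linarith
      · nlinarith
    linarith
  have hre : ∀ z : ℂ, 1 ≤ ‖z‖ → ‖z‖ ≤ ρ → m ≤ ((c : ℂ) + h * ((z + z⁻¹) / 2)).re := by
    intro z h1 h2
    have hb : -(z + z⁻¹).re ≤ ‖z‖ + ‖z‖⁻¹ := by
      calc _ ≤ |(z + z⁻¹).re| := neg_le_abs _
        _ ≤ ‖z + z⁻¹‖ := Complex.abs_re_le_norm _
        _ ≤ ‖z‖ + ‖z⁻¹‖ := norm_add_le _ _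
        _ = _ := by rw [norm_inv]
    have := mono _ h1 h2
    have e : ((c : ℂ) + h * ((z + z⁻¹) / 2)).re = c + h * ((z + z⁻¹).re / 2) := by
      rw [Complex.add_re, Complex.ofReal_re, Complex.re_ofReal_mul, Complex.div_ofNat_re]
    rw [e, hm]
    nlinarith
  let G : ℂ → ℂ := fun z => ((c : ℂ) + h * ((z + z⁻¹) / 2)) ^ ((-s : ℝ) : ℂ)
  have hcos : ∀ θ : ℝ, m ≤ c + h * Real.cos θ := by
    intro θ
    have h1 := Real.neg_one_le_cos θ
    have := mono 1 le_rfl hρ.le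
    rw [hm]
    norm_num at this
    nlinarith
  let F : ℝ → ℝ := fun θ => f (Real.cos θ)
  have hF : Continuous F := by
    simp only [F, hf]
    refine Continuous.rpow_const (by fun_prop) ?_
    intro θ
    left
    have := hcos θ
    linarith
  have heven : ∀ x, F (-x) = F x := by intro x; simp [F]
  have hper : Function.Periodic F (2 * Real.pi) := by intro x; simp [F]
  have hG : ∀ z : ℂ, 1 ≤ ‖z‖ → ‖z‖ ≤ ρ → DifferentiableAt ℂ G z := by
    intro z h1 h2
    have hz : z ≠ 0 := by
      rintro rfl
      norm_num at h1
    have hd : DifferentiableAt ℂ (fun z : ℂ => (c : ℂ) + h * ((z + z⁻¹) / 2)) z := by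
      fun_prop (disch := assumption)
    refine hd.cpow_const ?_
    left
    have := hre z h1 h2
    linarith
  have hGM : ∀ z : ℂ, ‖z‖ = ρ → ‖G z‖ ≤ m ^ (-s) := by
    intro z hz
    have := hre z (by linarith) hz.le
    simp only [G]
    rw [Complex.norm_cpow_real]
    apply Real.rpow_le_rpow_of_nonpos hpos
    · exact this.trans ((le_abs_self _).trans (Complex.abs_re_le_norm _))
    · linarith
  have hGF : ∀ θ : ℝ, G (Complex.exp (θ * Complex.I)) = F θ := by
    intro θ
    simp only [G, F, hf]
    rw [Complex.ofReal_cpow (by linarith [hcos θ]), ← Complex.exp_neg]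
    push_cast
    rw [Complex.cos]
    ring_nf
  let e : ℕ → ℝ := fun n => ∫ θ in (0:ℝ)..Real.pi, F θ * Real.cos (n * θ)
  have hb := cb_coeff_bound F hF heven hper G ρ (m ^ (-s)) hρ hG hGM hGF
  have hγe : ∀ i : ℕ, γ i = ((2 - if i = 0 then 1 else 0) / Real.pi) * e i := by
    intro i
    rw [hγ]
    congr 1
    have := (Polynomial.Chebyshev.integral_measureT (fun x => f x * (Polynomial.Chebyshev.T ℝ i).eval x)).symm.trans
      Polynomial.Chebyshev.integral_measureT_eq_integral_cos
    simp only [Polynomial.Chebyshev.T_real_cos, Int.cast_natCast, Real.sqrt_inv, ← div_eq_mul_inv] at this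
    exact this
  have key := cb_tail F hF heven hper ρ (m ^ (-s)) hρ e (fun _ => rfl) hb (Real.arccos t) k
  have ht' : Real.cos (Real.arccos t) = t := Real.cos_arccos ht.1 ht.2
  have hT : ∀ i : ℕ, (Polynomial.Chebyshev.T ℝ i).eval t = Real.cos (i * Real.arccos t) := by
    intro i
    conv_lhs => rw [← ht', Polynomial.Chebyshev.T_real_cos]
    simp
  simp only [hT, hγe]
  simpa only [F, ht'] using key


/-- Theorem 2.3 of the paper: for `g(t) = (c+ht)^{-1/2}` and `q(t) = (c+ht)^{-1}` with
`c = (a+b)/2`, `h = (b−a)/2`, `0 < a < b`, and any `1 < ρ < c/h + √((c/h)²−1)`, the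
truncated Chebyshev expansions `g_{k₁}` and `q_{k₂}` satisfy
`‖g − g_{k₁}‖_∞ ≤ 2ρ^{−k₁}/((ρ−1)√(c − h(ρ+ρ⁻¹)/2))` and
`‖q − q_{k₂}‖_∞ ≤ 2ρ^{−k₂}/((ρ−1)(c − h(ρ+ρ⁻¹)/2))`. -/
theorem chebyshev_bound_inv_sqrt_and_inv (a b c h ρ : ℝ)
    (ha : 0 < a) (hab : a < b)
    (hc : c = (a + b) / 2) (hh : h = (b - a) / 2)
    (hρ1 : 1 < ρ) (hρ2 : ρ < c / h + Real.sqrt ((c / h) ^ 2 - 1))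
    (g q : ℝ → ℝ)
    (hg : ∀ t : ℝ, g t = (c + h * t) ^ (-(1 / 2 : ℝ)))
    (hq : ∀ t : ℝ, q t = (c + h * t)⁻¹)
    (k₁ k₂ : ℕ) (γ β : ℕ → ℝ)
    (hγ : ∀ i : ℕ, γ i = ((2 - if i = 0 then 1 else 0) / Real.pi) *
      ∫ s in (-1 : ℝ)..1, g s * (Polynomial.Chebyshev.T ℝ i).eval s / Real.sqrt (1 - s ^ 2))
    (hβ : ∀ i : ℕ, β i = ((2 - if i = 0 then 1 else 0) / Real.pi) *
      ∫ s in (-1 : ℝ)..1, q s * (Polynomial.Chebyshev.T ℝ i).eval s / Real.sqrt (1 - s ^ 2))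
    (gk qk : ℝ → ℝ)
    (hgk : ∀ t : ℝ, gk t = ∑ i ∈ Finset.range (k₁ + 1),
      γ i * (Polynomial.Chebyshev.T ℝ i).eval t)
    (hqk : ∀ t : ℝ, qk t = ∑ i ∈ Finset.range (k₂ + 1),
      β i * (Polynomial.Chebyshev.T ℝ i).eval t) :
    (∀ t ∈ Set.Icc (-1 : ℝ) 1, |g t - gk t| ≤
        2 * ρ ^ (-(k₁ : ℤ)) / ((ρ - 1) * Real.sqrt (c - h * ((ρ + ρ⁻¹) / 2)))) ∧
    (∀ t ∈ Set.Icc (-1 : ℝ) 1, |q t - qk t| ≤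
        2 * ρ ^ (-(k₂ : ℤ)) / ((ρ - 1) * (c - h * ((ρ + ρ⁻¹) / 2)))) := by
  subst hc hh
  have hh0 : 0 < (b - a) / 2 := by linarith
  have hpos : 0 < (a + b) / 2 - (b - a) / 2 * ((ρ + ρ⁻¹) / 2) := by
    set c := (a + b) / 2 with hc
    set h := (b - a) / 2 with hh
    have hX : 1 < c / h := by rw [lt_div_iff₀ hh0]; linarith
    have hcX : c = h * (c / h) := by field_simp
    set X := c / h
    have hS : 0 ≤ X ^ 2 - 1 := by nlinarith
    have hsq := Real.sq_sqrt hS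
    have hS0 := Real.sqrt_nonneg (X ^ 2 - 1)
    set S := Real.sqrt (X ^ 2 - 1)
    have hlow : X - S < ρ := by nlinarith
    have hq1 : ρ ^ 2 + 1 < 2 * X * ρ := by nlinarith
    have hq2 : ρ + ρ⁻¹ < 2 * X := by
      have : ρ + ρ⁻¹ = (ρ ^ 2 + 1) / ρ := by field_simp
      rw [this, div_lt_iff₀ (by linarith)]
      exact hq1
    rw [hcX]
    nlinarith
  refine ⟨fun t ht => ?_, fun t ht => ?_⟩
  · rw [hgk]
    refine (cb_main _ _ ρ (1 / 2) hh0 (by norm_num) hρ1 hpos g hg k₁ γ hγ t ht).trans_eq ?_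
    rw [Real.rpow_neg hpos.le, ← Real.sqrt_eq_rpow, div_mul_eq_div_div, div_eq_mul_inv _ (Real.sqrt _)]
  · rw [hqk]
    refine (cb_main _ _ ρ 1 hh0 one_pos hρ1 hpos q
      (fun t => by rw [hq, Real.rpow_neg_one]) k₂ β hβ t ht).trans_eq ?_
    rw [Real.rpow_neg_one, div_mul_eq_div_div, ← div_eq_mul_inv]
end

section
/- (Proposition 2.4 of the paper.) Let 0 < a < b, set c = (a+b)/2 and h = (b−a)/2, and define g(t) = (c + h t)^{−1/2} and q(t) = (c + h t)^{−1} for t ∈ [−1, 1]. Let ρ be any real number with 1 < ρ < c/h + √((c/h)² − 1). Then the degree-k₁ truncated Chebyshev expansion g_{k₁} of g and the degree-k₂ truncated Chebyshev expansion q_{k₂} of q satisfy ‖g − g_{k₁}‖_C ≤ √(2π/(ρ² − 1)) · ρ^{−k₁} / √(c − h (ρ + ρ⁻¹)/2) and ‖q − q_{k₂}‖_C ≤ √(2π/(ρ² − 1)) · ρ^{−k₂} / (c − h (ρ + ρ⁻¹)/2), where ‖p‖_C = (∫_{−1}^{1} p(s)²/√(1 − s²) ds)^{1/2} is the Chebyshev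 weighted L² norm. -/
open Polynomial intervalIntegral

/-- The Chebyshev weighted `L²` norm `‖p‖_C = (∫_{−1}^{1} p(s)²/√(1−s²) ds)^{1/2}`. -/
noncomputable def chebNorm (p : ℝ → ℝ) : ℝ :=
  Real.sqrt (∫ s in (-1 : ℝ)..1, p s ^ 2 / Real.sqrt (1 - s ^ 2))

lemma cheb_aux_fold (φ : ℝ → ℂ) (hφ : Continuous φ) :
    ∫ θ in (0 : ℝ)..(2 * Real.pi), φ θ =
      ∫ θ in (0 : ℝ)..Real.pi, (φ θ + φ (2 * Real.pi - θ)) := by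
  rw [intervalIntegral.integral_add (hφ.intervalIntegrable _ _)
    ((by fun_prop : Continuous fun θ => φ (2 * Real.pi - θ)).intervalIntegrable _ _)]
  rw [intervalIntegral.integral_comp_sub_left (fun x => φ x)]
  rw [show 2 * Real.pi - Real.pi = Real.pi by ring, sub_zero]
  exact (intervalIntegral.integral_add_adjacent_intervals (hφ.intervalIntegrable _ _)
    (hφ.intervalIntegrable _ _)).symm

lemma cheb_aux_cont (P : ℝ → ℝ) (hP : ContinuousOn P (Set.Icc (-1) 1)) :
    Continuous (fun θ : ℝ => P (Real.cos θ)) :=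
  hP.comp_continuous Real.continuous_cos (fun x => ⟨Real.neg_one_le_cos x, Real.cos_le_one x⟩)

lemma cheb_aux_coeff (P : ℝ → ℝ) (hP : ContinuousOn P (Set.Icc (-1) 1)) (n : ℤ) :
    ∫ θ in (0 : ℝ)..(2 * Real.pi),
        Complex.exp (-(n : ℂ) * θ * Complex.I) * (P (Real.cos θ) : ℂ) =
      2 * ((∫ θ in (0 : ℝ)..Real.pi, P (Real.cos θ) * Real.cos (n * θ) : ℝ) : ℂ) := by
  have hc := cheb_aux_cont P hP
  have hc' : Continuous (fun θ : ℝ => (P (Real.cos θ) : ℂ)) := Complex.continuous_ofReal.comp hc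
  have hc2 : Continuous (fun θ : ℝ =>
      Complex.exp (-(n : ℂ) * θ * Complex.I) * (P (Real.cos θ) : ℂ)) :=
    (by fun_prop : Continuous fun θ : ℝ => Complex.exp (-(n : ℂ) * θ * Complex.I)).mul hc'
  rw [cheb_aux_fold _ hc2, ← intervalIntegral.integral_ofReal,
    ← intervalIntegral.integral_const_mul]
  refine intervalIntegral.integral_congr fun θ _ => ?_
  have h1 : Real.cos (2 * Real.pi - θ) = Real.cos θ := by
    rw [Real.cos_two_pi_sub]
  have h2 : Complex.exp (-(n : ℂ) * ((2 * Real.pi - θ : ℝ) : ℂ) * Complex.I) =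
      Complex.exp ((n : ℂ) * θ * Complex.I) := by
    rw [Complex.exp_eq_exp_iff_exists_int]
    refine ⟨-n, ?_⟩
    push_cast
    ring
  simp only [h1, h2]
  push_cast
  rw [Complex.cos]
  rw [show -((n : ℂ) * θ) * Complex.I = -(n : ℂ) * θ * Complex.I by ring]
  ring

lemma cheb_aux_re (z : ℂ) (ρ : ℝ) (h1 : 1 ≤ ‖z‖) (h2 : ‖z‖ ≤ ρ) :
    -((ρ + ρ⁻¹) / 2) ≤ ((z + z⁻¹) / 2).re := by
  have h3 : ‖z + z⁻¹‖ ≤ ρ + ρ⁻¹ := by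
    refine (norm_add_le _ _).trans ?_
    rw [norm_inv]
    have hz : 0 < ‖z‖ := by linarith
    have hr : 0 < ρ := by linarith
    have : ρ + ρ⁻¹ - (‖z‖ + ‖z‖⁻¹) = (ρ - ‖z‖) * (ρ * ‖z‖ - 1) / (ρ * ‖z‖) := by
      field_simp
      ring
    have h4 : 0 ≤ (ρ - ‖z‖) * (ρ * ‖z‖ - 1) / (ρ * ‖z‖) := by
      apply div_nonneg _ (by positivity)
      apply mul_nonneg (by linarith)
      nlinarith
    linarith
  have h5 := Complex.abs_re_le_norm (z + z⁻¹)
  have h6 : ((z + z⁻¹) / 2).re = (z + z⁻¹).re / 2 := by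
    simp
  rw [h6]
  have := (abs_le.mp (h5.trans h3)).1
  linarith

lemma cheb_aux_contour (F : ℂ → ℂ) (c h ρ M : ℝ) (hh : 0 ≤ h) (hρ : 1 < ρ)
    (hm : 0 < c - h * ((ρ + ρ⁻¹) / 2))
    (hFd : ∀ z : ℂ, 0 < z.re → DifferentiableAt ℂ F z)
    (hFb : ∀ z : ℂ, c - h * ((ρ + ρ⁻¹) / 2) ≤ z.re → ‖F z‖ ≤ M) (n : ℕ) :
    ‖∫ θ in (0 : ℝ)..(2 * Real.pi),
        Complex.exp (-((n : ℤ) : ℂ) * θ * Complex.I) * F (c + h * (Real.cos θ : ℝ))‖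
      ≤ 2 * Real.pi * (M * (ρ ^ n)⁻¹) := by
  set U : ℂ → ℂ := fun z => F (c + h * ((z + z⁻¹) / 2)) * (z ^ (n + 1))⁻¹ with hU
  have hre : ∀ z : ℂ, 1 ≤ ‖z‖ → ‖z‖ ≤ ρ →
      c - h * ((ρ + ρ⁻¹) / 2) ≤ ((c : ℂ) + h * ((z + z⁻¹) / 2)).re := by
    intro z h1 h2
    have := cheb_aux_re z ρ h1 h2
    rw [Complex.add_re, Complex.re_ofReal_mul, Complex.ofReal_re]
    nlinarith
  have hd : ∀ z : ℂ, 1 ≤ ‖z‖ → ‖z‖ ≤ ρ → DifferentiableAt ℂ U z := by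
    intro z h1 h2
    have hz : z ≠ 0 := by
      rintro rfl
      simp at h1
      linarith
    have hF := hFd _ (hm.trans_le (hre z h1 h2))
    have hin : DifferentiableAt ℂ (fun z : ℂ => (c : ℂ) + h * ((z + z⁻¹) / 2)) z := by
      have : DifferentiableAt ℂ (fun z : ℂ => z⁻¹) z := differentiableAt_inv hz
      fun_prop
    have hcomp : DifferentiableAt ℂ (fun z : ℂ => F ((c : ℂ) + h * ((z + z⁻¹) / 2))) z :=
      DifferentiableAt.comp z (g := F) hF hin
    exact hcomp.mul ((differentiableAt_id.pow (n + 1)).inv (pow_ne_zero _ hz))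
  have key : (∮ z in C(0, ρ), U z) = ∮ z in C(0, 1), U z := by
    refine Complex.circleIntegral_eq_of_differentiable_on_annulus_off_countable one_pos hρ.le
      (s := ∅) Set.countable_empty ?_ ?_
    · intro z hz
      simp only [Set.mem_sdiff, Metric.mem_closedBall, Metric.mem_ball, dist_zero_right,
        not_lt] at hz
      exact (hd z hz.2 hz.1).continuousAt.continuousWithinAt
    · intro z hz
      simp only [Set.mem_sdiff, Metric.mem_closedBall, Metric.mem_ball, dist_zero_right,
        not_le] at hz
      exact hd z hz.1.2.le hz.1.1.le
  have hone : (∮ z in C(0, 1), U z) = Complex.I * ∫ θ in (0 : ℝ)..(2 * Real.pi),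
        Complex.exp (-((n : ℤ) : ℂ) * θ * Complex.I) * F (c + h * (Real.cos θ : ℝ)) := by
    rw [circleIntegral, ← intervalIntegral.integral_const_mul]
    refine intervalIntegral.integral_congr fun θ _ => ?_
    simp only [deriv_circleMap, circleMap, hU, smul_eq_mul, zero_add, Complex.ofReal_one, one_mul]
    have e1 : (Complex.exp (θ * Complex.I) + (Complex.exp (θ * Complex.I))⁻¹) / 2
        = ((Real.cos θ : ℝ) : ℂ) := by
      rw [← Complex.exp_neg, Complex.ofReal_cos, Complex.cos, neg_mul]
    have e2 : Complex.exp (-((n : ℤ) : ℂ) * θ * Complex.I) =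
        Complex.exp (θ * Complex.I) * (Complex.exp (θ * Complex.I) ^ (n + 1))⁻¹ := by
      rw [← Complex.exp_nat_mul, ← Complex.exp_neg, ← Complex.exp_add]
      congr 1
      push_cast
      ring
    rw [e1, e2]
    ring
  have hb : ‖∮ z in C(0, ρ), U z‖ ≤ 2 * Real.pi * ρ * (M * (ρ ^ (n + 1))⁻¹) := by
    refine circleIntegral.norm_integral_le_of_norm_le_const (by linarith) ?_
    intro z hz
    have hz' : ‖z‖ = ρ := by simpa using hz
    simp only [hU, norm_mul, norm_inv, norm_pow, hz']
    have := hFb _ (hre z (by linarith) hz'.le)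
    gcongr
  rw [key, hone, norm_mul, Complex.norm_I, one_mul] at hb
  refine hb.trans (le_of_eq ?_)
  have : ρ ≠ 0 := by linarith
  rw [pow_succ]
  field_simp

lemma cheb_aux_geom (k : ℕ) (A r : ℝ) (h0 : 0 ≤ r) (h1 : r < 1) :
    HasSum (fun n : ℕ => if n ≤ k then 0 else A * r ^ n) (A * r ^ (k + 1) * (1 - r)⁻¹) := by
  have h := (hasSum_geometric_of_lt_one h0 h1).mul_left (A * r ^ (k + 1))
  rw [← hasSum_nat_add_iff' (k + 1)]
  have hz : ∑ i ∈ Finset.range (k + 1), (if i ≤ k then (0 : ℝ) else A * r ^ i) = 0 := by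
    refine Finset.sum_eq_zero fun i hi => ?_
    rw [if_pos (by have := Finset.mem_range.mp hi; omega)]
  rw [hz, sub_zero]
  have he : (fun n : ℕ => if n + (k + 1) ≤ k then (0 : ℝ) else A * r ^ (n + (k + 1))) =
      fun n => A * r ^ (k + 1) * r ^ n := by
    funext n
    rw [if_neg (by omega)]
    ring
  rw [he]
  exact h

lemma cheb_aux_sum (f : ℤ → ℝ) (S : ℝ) (hf : HasSum f S) (k : ℕ) (A r : ℝ) (h0 : 0 ≤ r)
    (h1 : r < 1) (hb : ∀ n : ℤ, f n ≤ if n.natAbs ≤ k then 0 else A * r ^ n.natAbs) :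
    S ≤ 2 * (A * r ^ (k + 1) * (1 - r)⁻¹) := by
  have g1 := cheb_aux_geom k A r h0 h1
  have g2 : HasSum (fun n : ℕ => if n + 1 ≤ k then 0 else A * r ^ (n + 1))
      (A * r ^ (k + 1) * (1 - r)⁻¹) := by
    have := (hasSum_nat_add_iff' 1).mpr g1
    simpa using this
  have g3 : HasSum (fun n : ℤ => if n.natAbs ≤ k then 0 else A * r ^ n.natAbs)
      (A * r ^ (k + 1) * (1 - r)⁻¹ + A * r ^ (k + 1) * (1 - r)⁻¹) := by
    refine HasSum.of_nat_of_neg_add_one (f := fun n : ℤ => if n.natAbs ≤ k then 0 else A * r ^ n.natAbs) ?_ ?_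
    · simpa using g1
    · convert g2 using 2 with n
      rw [show (-((n : ℤ) + 1)).natAbs = n + 1 by omega]
  have := hasSum_le hb hf g3
  linarith

lemma cheb_aux_integral (f : ℝ → ℝ) :
    ∫ s in (-1 : ℝ)..1, f s / Real.sqrt (1 - s ^ 2) =
      ∫ θ in (0 : ℝ)..Real.pi, f (Real.cos θ) := by
  rw [← Polynomial.Chebyshev.integral_measureT_eq_integral_cos,
    Polynomial.Chebyshev.integral_measureT]
  simp only [div_eq_mul_inv, Real.sqrt_inv]

/-- orthogonality relation for cosines -/
lemma cheb_aux_orth (i n : ℕ) :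
    ∫ θ in (0 : ℝ)..Real.pi, Real.cos (i * θ) * Real.cos (n * θ) =
      if i = n then (if n = 0 then Real.pi else Real.pi / 2) else 0 := by
  have h : ∫ θ in (0 : ℝ)..Real.pi, Real.cos (i * θ) * Real.cos (n * θ) =
      ∫ x, (Polynomial.Chebyshev.T ℝ i).eval x * (Polynomial.Chebyshev.T ℝ n).eval x
        ∂Polynomial.Chebyshev.measureT := by
    rw [Polynomial.Chebyshev.integral_measureT_eq_integral_cos]
    simp [Polynomial.Chebyshev.T_real_cos]
  rw [h]
  split_ifs with h1 h2
  · subst h1; subst h2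
    exact Polynomial.Chebyshev.integral_eval_T_real_mul_self_measureT_zero
  · subst h1
    exact Polynomial.Chebyshev.integral_T_real_mul_self_measureT_of_ne_zero h2
  · exact Polynomial.Chebyshev.integral_eval_T_real_mul_eval_T_real_measureT_of_ne h1

lemma cheb_aux_general (F : ℂ → ℂ) (G : ℝ → ℝ) (c h ρ M : ℝ) (hh : 0 ≤ h) (hρ : 1 < ρ)
    (hm : 0 < c - h * ((ρ + ρ⁻¹) / 2)) (hM : 0 ≤ M)
    (hFd : ∀ z : ℂ, 0 < z.re → DifferentiableAt ℂ F z)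
    (hFb : ∀ z : ℂ, c - h * ((ρ + ρ⁻¹) / 2) ≤ z.re → ‖F z‖ ≤ M)
    (hG : ContinuousOn G (Set.Icc (-1) 1))
    (hFG : ∀ t ∈ Set.Icc (-1 : ℝ) 1, F (c + h * (t : ℝ)) = (G t : ℂ))
    (k : ℕ) (γ : ℕ → ℝ)
    (hγ : ∀ i : ℕ, γ i = ((2 - if i = 0 then 1 else 0) / Real.pi) *
      ∫ s in (-1 : ℝ)..1, G s * (Polynomial.Chebyshev.T ℝ i).eval s / Real.sqrt (1 - s ^ 2))
    (Gk : ℝ → ℝ)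
    (hGk : ∀ t : ℝ, Gk t = ∑ i ∈ Finset.range (k + 1),
      γ i * (Polynomial.Chebyshev.T ℝ i).eval t) :
    chebNorm (fun t => G t - Gk t) ≤
        Real.sqrt (2 * Real.pi / (ρ ^ 2 - 1)) * ρ ^ (-(k : ℤ)) * M := by
  have hpi := Real.pi_pos
  have hGc := cheb_aux_cont G hG
  set P : ℝ → ℝ := fun t => G t - Gk t with hP
  have hGkc : Continuous Gk := by
    rw [funext hGk]
    fun_prop
  have hPc : ContinuousOn P (Set.Icc (-1) 1) := hG.sub hGkc.continuousOn
  have hPcc := cheb_aux_cont P hPc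
  set J : ℕ → ℝ := fun n => ∫ θ in (0 : ℝ)..Real.pi, G (Real.cos θ) * Real.cos (n * θ) with hJ
  have hγJ : ∀ i, γ i = ((2 - if i = 0 then 1 else 0) / Real.pi) * J i := by
    intro i
    rw [hγ i, cheb_aux_integral (fun s => G s * (Polynomial.Chebyshev.T ℝ i).eval s)]
    simp [hJ, Polynomial.Chebyshev.T_real_cos]
  -- bound on J
  have hJb : ∀ n : ℕ, |J n| ≤ Real.pi * (M * (ρ ^ n)⁻¹) := by
    intro n
    have h1 := cheb_aux_contour F c h ρ M hh hρ hm hFd hFb n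
    have h2 := cheb_aux_coeff G hG n
    have h3 : ∫ θ in (0 : ℝ)..(2 * Real.pi),
        Complex.exp (-((n : ℤ) : ℂ) * θ * Complex.I) * F (c + h * (Real.cos θ : ℝ)) =
        2 * (J n : ℂ) := by
      rw [show J n = ∫ θ in (0 : ℝ)..Real.pi, G (Real.cos θ) * Real.cos (((n : ℤ) : ℝ) * θ) by
        simp [hJ], ← h2]
      refine intervalIntegral.integral_congr fun θ _ => ?_
      rw [hFG _ ⟨Real.neg_one_le_cos θ, Real.cos_le_one θ⟩]
    rw [h3, norm_mul, Complex.norm_real, Real.norm_eq_abs, Complex.norm_ofNat] at h1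
    linarith
  -- coefficients of P
  have hPJ : ∀ n : ℕ, ∫ θ in (0 : ℝ)..Real.pi, P (Real.cos θ) * Real.cos (n * θ) =
      if n ≤ k then 0 else J n := by
    intro n
    have e1 : ∀ θ : ℝ, P (Real.cos θ) * Real.cos (n * θ) =
        G (Real.cos θ) * Real.cos (n * θ) -
          ∑ i ∈ Finset.range (k + 1), γ i * (Real.cos (i * θ) * Real.cos (n * θ)) := by
      intro θ
      simp only [hP, hGk, Polynomial.Chebyshev.T_real_cos, sub_mul, Finset.sum_mul, mul_assoc,
        Int.cast_natCast]
    simp only [e1]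
    have hc2 : Continuous (fun θ : ℝ => G (Real.cos θ) * Real.cos (n * θ)) :=
      hGc.mul (by fun_prop)
    rw [intervalIntegral.integral_sub (hc2.intervalIntegrable _ _)
      ((by fun_prop : Continuous _).intervalIntegrable _ _)]
    rw [intervalIntegral.integral_finsetSum
      (fun i _ => (by fun_prop : Continuous _).intervalIntegrable _ _)]
    simp only [intervalIntegral.integral_const_mul, cheb_aux_orth, mul_ite, mul_zero,
      Finset.sum_ite_eq', Finset.mem_range, Order.lt_add_one_iff]
    split_ifs with h1 h2
    · rw [hγJ, if_pos h2]
      simp only [hJ]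
      field_simp
      ring
    · rw [hγJ, if_neg h2]
      simp only [hJ]
      field_simp
      ring
    · simp [hJ]
  -- Parseval
  have h2pi : (0 : ℝ) < 2 * Real.pi := by positivity
  set Φ : ℝ → ℂ := fun θ => (P (Real.cos θ) : ℂ) with hΦ
  have hΦc : Continuous Φ := Complex.continuous_ofReal.comp hPcc
  have hL2 : MeasureTheory.MemLp Φ 2 (MeasureTheory.volume.restrict (Set.Ioc 0 (2 * Real.pi))) := by
    obtain ⟨C, hC⟩ := (isCompact_Icc (a := (0 : ℝ)) (b := 2 * Real.pi)).exists_bound_of_continuousOn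
      hΦc.continuousOn
    refine MeasureTheory.MemLp.of_bound hΦc.aestronglyMeasurable C ?_
    filter_upwards [MeasureTheory.ae_restrict_mem measurableSet_Ioc] with x hx
    exact hC x (Set.Ioc_subset_Icc_self hx)
  have hpars := hasSum_sq_fourierCoeffOn h2pi hL2
  have hcoef : ∀ n : ℤ, fourierCoeffOn h2pi Φ n =
      (((if n.natAbs ≤ k then 0 else J n.natAbs) / Real.pi : ℝ) : ℂ) := by
    intro n
    rw [← hPJ, fourierCoeffOn_eq_integral]
    have h1 := cheb_aux_coeff P hPc n
    have h2 : ∀ θ : ℝ, Real.cos (n * θ) = Real.cos (n.natAbs * θ) := by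
      intro θ
      rcases Int.natAbs_eq n with h | h
      · conv_lhs => rw [h]
        simp
      · conv_lhs => rw [h]
        simp
    simp only [h2] at h1
    have h3 : ∫ θ in (0 : ℝ)..(2 * Real.pi),
        fourier (-n) (θ : AddCircle (2 * Real.pi - 0)) • Φ θ =
        ∫ θ in (0 : ℝ)..(2 * Real.pi),
        Complex.exp (-(n : ℂ) * θ * Complex.I) * (P (Real.cos θ) : ℂ) := by
      refine intervalIntegral.integral_congr fun θ _ => ?_
      simp only [fourier_coe_apply, hΦ, smul_eq_mul]
      congr 2
      have : (Real.pi : ℂ) ≠ 0 := by exact_mod_cast hpi.ne'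
      push_cast
      field_simp
      ring
    rw [h3, h1, sub_zero, Complex.real_smul]
    have : (Real.pi : ℂ) ≠ 0 := by exact_mod_cast hpi.ne'
    push_cast
    field_simp
  have hρ0 : 0 < ρ := by linarith
  have hr1 : (ρ ^ 2)⁻¹ < 1 := inv_lt_one_of_one_lt₀ (by nlinarith)
  have hbound := cheb_aux_sum _ _ hpars k (M ^ 2) ((ρ ^ 2)⁻¹) (by positivity) hr1 (by
    intro n
    rw [hcoef, Complex.norm_real, Real.norm_eq_abs, sq_abs]
    split_ifs with h1
    · simp
    · have h2 := hJb n.natAbs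
      have h3 : |J n.natAbs / Real.pi| ≤ M * (ρ ^ n.natAbs)⁻¹ := by
        rw [abs_div, abs_of_pos hpi, div_le_iff₀ hpi]
        linarith
      calc (J n.natAbs / Real.pi) ^ 2 = |J n.natAbs / Real.pi| ^ 2 := (sq_abs _).symm
        _ ≤ (M * (ρ ^ n.natAbs)⁻¹) ^ 2 := by gcongr
        _ = M ^ 2 * (ρ ^ 2)⁻¹ ^ n.natAbs := by
          rw [mul_pow, inv_pow, inv_pow, ← pow_mul, ← pow_mul, mul_comm 2])
  -- the norm
  have hnorm : ∫ θ in (0 : ℝ)..(2 * Real.pi), ‖Φ θ‖ ^ 2 =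
      2 * ∫ θ in (0 : ℝ)..Real.pi, P (Real.cos θ) ^ 2 := by
    have h1 := cheb_aux_coeff (fun t => P t ^ 2) (hPc.pow 2) 0
    have h2 : ((∫ θ in (0 : ℝ)..(2 * Real.pi), ‖Φ θ‖ ^ 2 : ℝ) : ℂ) =
      ((2 * ∫ θ in (0 : ℝ)..Real.pi, P (Real.cos θ) ^ 2 : ℝ) : ℂ) := by
      rw [← intervalIntegral.integral_ofReal]
      simpa [hΦ] using h1
    exact_mod_cast h2
  rw [hnorm, sub_zero, smul_eq_mul] at hbound
  unfold chebNorm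
  rw [cheb_aux_integral (fun s => (fun t => G t - Gk t) s ^ 2)]
  refine Real.sqrt_le_iff.mpr ⟨by positivity, ?_⟩
  have hρ2 : 0 < ρ ^ 2 - 1 := by nlinarith
  rw [mul_pow, mul_pow, Real.sq_sqrt (by positivity)]
  have hfin : 2 * Real.pi / (ρ ^ 2 - 1) * (ρ ^ (-(k : ℤ))) ^ 2 * M ^ 2 =
      Real.pi * (2 * (M ^ 2 * (ρ ^ 2)⁻¹ ^ (k + 1) * (1 - (ρ ^ 2)⁻¹)⁻¹)) := by
    have e1 : (1 - (ρ ^ 2)⁻¹)⁻¹ = ρ ^ 2 / (ρ ^ 2 - 1) := by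
      rw [show 1 - (ρ ^ 2)⁻¹ = (ρ ^ 2 - 1) / ρ ^ 2 by field_simp, inv_div]
    rw [e1, zpow_neg, zpow_natCast, inv_pow, inv_pow, ← pow_mul, ← pow_mul]
    rw [show 2 * (k + 1) = k * 2 + 2 by ring, pow_add]
    field_simp
  rw [hfin]
  have := mul_le_mul_of_nonneg_left hbound hpi.le
  refine le_trans (le_of_eq ?_) this
  simp only [hP]
  field_simp

lemma cheb_aux_pos (c h ρ : ℝ) (hh : 0 < h) (hch : h < c) (hρ1 : 1 < ρ)
    (hρ2 : ρ < c / h + Real.sqrt ((c / h) ^ 2 - 1)) : 0 < c - h * ((ρ + ρ⁻¹) / 2) := by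
  set x := c / h with hx
  have hx1 : 1 < x := (one_lt_div hh).mpr hch
  have hcx : c = h * x := by rw [hx]; field_simp
  have hs0 := Real.sqrt_nonneg (x ^ 2 - 1)
  have hs := Real.sq_sqrt (show 0 ≤ x ^ 2 - 1 by nlinarith)
  set s := Real.sqrt (x ^ 2 - 1)
  have h1 : 0 < ρ - (x - s) := by
    have : x - s ≤ 1 := by nlinarith
    linarith
  have h2 : 0 < (x + s - ρ) * (ρ - (x - s)) := mul_pos (by linarith) h1
  have h3 : ρ ^ 2 + 1 < 2 * x * ρ := by nlinarith
  have h4 : ρ + ρ⁻¹ < 2 * x := by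
    rw [show ρ + ρ⁻¹ = (ρ ^ 2 + 1) / ρ by field_simp, div_lt_iff₀ (by linarith)]
    exact h3
  rw [hcx]
  nlinarith

lemma cheb_aux_rpow (c h ρ p : ℝ) (hp : p ≤ 0) (hh : 0 < h) (hch : h < c) (hρ : 1 < ρ)
    (hm : 0 < c - h * ((ρ + ρ⁻¹) / 2)) (k : ℕ) (γ : ℕ → ℝ) (G : ℝ → ℝ)
    (hGp : ∀ t, G t = (c + h * t) ^ p)
    (hγ : ∀ i : ℕ, γ i = ((2 - if i = 0 then 1 else 0) / Real.pi) *
      ∫ s in (-1 : ℝ)..1, G s * (Polynomial.Chebyshev.T ℝ i).eval s / Real.sqrt (1 - s ^ 2))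
    (Gk : ℝ → ℝ)
    (hGk : ∀ t : ℝ, Gk t = ∑ i ∈ Finset.range (k + 1),
      γ i * (Polynomial.Chebyshev.T ℝ i).eval t) :
    chebNorm (fun t => G t - Gk t) ≤
        Real.sqrt (2 * Real.pi / (ρ ^ 2 - 1)) * ρ ^ (-(k : ℤ)) *
          (c - h * ((ρ + ρ⁻¹) / 2)) ^ p := by
  have hpos : ∀ t ∈ Set.Icc (-1 : ℝ) 1, 0 < c + h * t := by
    intro t ht
    nlinarith [ht.1]
  refine cheb_aux_general (fun z => z ^ (p : ℂ)) G c h ρ _ hh.le hρ hm (by positivity)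
    ?_ ?_ ?_ ?_ k γ hγ Gk hGk
  · intro z hz
    exact DifferentiableAt.cpow_const differentiableAt_id (Or.inl hz)
  · intro z hz
    rw [Complex.norm_cpow_real]
    exact Real.rpow_le_rpow_of_nonpos hm (hz.trans (Complex.re_le_norm z)) hp
  · rw [funext hGp]
    exact ContinuousOn.rpow_const (by fun_prop) (fun t ht => Or.inl (hpos t ht).ne')
  · intro t ht
    rw [hGp, Complex.ofReal_cpow (hpos t ht).le]
    push_cast
    rfl

/-- Proposition 2.4 of the paper: for `g(t) = (c+ht)^{-1/2}` and `q(t) = (c+ht)^{-1}`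
with `c = (a+b)/2`, `h = (b−a)/2`, `0 < a < b`, and any `1 < ρ < c/h + √((c/h)²−1)`,
the truncated Chebyshev expansions satisfy
`‖g − g_{k₁}‖_C ≤ √(2π/(ρ²−1)) ρ^{−k₁}/√(c − h(ρ+ρ⁻¹)/2)` and
`‖q − q_{k₂}‖_C ≤ √(2π/(ρ²−1)) ρ^{−k₂}/(c − h(ρ+ρ⁻¹)/2)`. -/
theorem chebyshev_L2_bound_inv_sqrt_and_inv (a b c h ρ : ℝ)
    (ha : 0 < a) (hab : a < b)
    (hc : c = (a + b) / 2) (hh : h = (b - a) / 2)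
    (hρ1 : 1 < ρ) (hρ2 : ρ < c / h + Real.sqrt ((c / h) ^ 2 - 1))
    (g q : ℝ → ℝ)
    (hg : ∀ t : ℝ, g t = (c + h * t) ^ (-(1 / 2 : ℝ)))
    (hq : ∀ t : ℝ, q t = (c + h * t)⁻¹)
    (k₁ k₂ : ℕ) (γ β : ℕ → ℝ)
    (hγ : ∀ i : ℕ, γ i = ((2 - if i = 0 then 1 else 0) / Real.pi) *
      ∫ s in (-1 : ℝ)..1, g s * (Polynomial.Chebyshev.T ℝ i).eval s / Real.sqrt (1 - s ^ 2))
    (hβ : ∀ i : ℕ, β i = ((2 - if i = 0 then 1 else 0) / Real.pi) *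
      ∫ s in (-1 : ℝ)..1, q s * (Polynomial.Chebyshev.T ℝ i).eval s / Real.sqrt (1 - s ^ 2))
    (gk qk : ℝ → ℝ)
    (hgk : ∀ t : ℝ, gk t = ∑ i ∈ Finset.range (k₁ + 1),
      γ i * (Polynomial.Chebyshev.T ℝ i).eval t)
    (hqk : ∀ t : ℝ, qk t = ∑ i ∈ Finset.range (k₂ + 1),
      β i * (Polynomial.Chebyshev.T ℝ i).eval t) :
    chebNorm (fun t => g t - gk t) ≤
        Real.sqrt (2 * Real.pi / (ρ ^ 2 - 1)) * ρ ^ (-(k₁ : ℤ)) /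
          Real.sqrt (c - h * ((ρ + ρ⁻¹) / 2)) ∧
    chebNorm (fun t => q t - qk t) ≤
        Real.sqrt (2 * Real.pi / (ρ ^ 2 - 1)) * ρ ^ (-(k₂ : ℤ)) /
          (c - h * ((ρ + ρ⁻¹) / 2)) := by
  have hh0 : 0 < h := by rw [hh]; linarith
  have hch : h < c := by rw [hh, hc]; linarith
  have hm := cheb_aux_pos c h ρ hh0 hch hρ1 hρ2
  constructor
  · refine (cheb_aux_rpow c h ρ (-(1 / 2 : ℝ)) (by norm_num) hh0 hch hρ1 hm k₁ γ g hg hγ gk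
      hgk).trans (le_of_eq ?_)
    rw [Real.rpow_neg hm.le, ← Real.sqrt_eq_rpow]
    exact (div_eq_mul_inv _ _).symm
  · refine (cheb_aux_rpow c h ρ (-1) (by norm_num) hh0 hch hρ1 hm k₂ β q
      (fun t => by rw [hq, Real.rpow_neg_one]) hβ qk hqk).trans (le_of_eq ?_)
    rw [Real.rpow_neg_one]
    exact (div_eq_mul_inv _ _).symm
end
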